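/- arXiv:1110.3493 — 2 statements merged into one kernel-verified Lean document; each statement's English description precedes it below -/
import Mathlib

section
/- For every integer M ≥ 4, ∑_{ν=2}^{M-2} (2ν-1)(2M-2ν-1) ζ₂(2M-2ν, 2ν) = (3/4)(M-3) ζ(2M). -/
open scoped BigOperators

/-- Double zeta value `ζ₂(k₁,k₂) = ∑_{1 ≤ m < m+n} 1/(m^{k₁} (m+n)^{k₂})`. -/
noncomputable def zeta2 (k1 k2 : ℕ) : ℂ :=
  ∑' p : ℕ × ℕ, 1 / (((p.1 : ℂ) + 1) ^ k1 * ((p.1 : ℂ) + 1 + ((p.2 : ℂ) + 1)) ^ k2)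

/-!
By symmetry, the harmonic product `ζ(a) ζ(b) = ζ₂(a, b) + ζ₂(b, a) + ζ(a + b)` reduces the sum to
the convolution of the numbers `(2k - 1) ζ(2k)` over `i + j = M` with `i, j ≥ 2`. By Euler's
formula, `(2k - 1) ζ(2k)` is `(2πi)^(2k) / 2` times the coefficient of `X^(2k)` in the even series
`G = X² eˣ / (eˣ - 1)² = (X / 2)² / sinh²(X / 2)`. With `θ = X d/dX`, this series satisfies
`(θ - 2)(θ - 3) G = 6 G² + X² G`, a degenerate form of the differential equation
`℘'' = 6 ℘² - g₂ / 2` of the Weierstrass function, and comparing coefficients evaluates the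
convolution. Since the coefficient of `X²` in `G` is `-1/12`, the terms of `6 G²` with `i = 1` or
`j = 1` cancel `X² G`, which is why the sum starts at `2`.
-/

section FiniteSums

open Finset

theorem sum_Icc_eq_sum_antidiagonal {A : Type*} [AddCommMonoid A] (f : ℕ → A) (a n : ℕ) :
    ∑ k ∈ Icc a (n + a), f k = ∑ p ∈ antidiagonal n, f (p.1 + a) := by
  refine sum_nbij' (fun k => (k - a, n + a - k)) (fun p => p.1 + a) ?_ ?_ ?_ ?_ ?_
  · simp only [mem_Icc, HasAntidiagonal.mem_antidiagonal]; omega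
  · simp only [mem_Icc, HasAntidiagonal.mem_antidiagonal]; omega
  · simp only [mem_Icc]; omega
  · simp only [HasAntidiagonal.mem_antidiagonal, Prod.forall, Prod.mk.injEq]; omega
  · intro k hk
    rw [Nat.sub_add_cancel (mem_Icc.mp hk).1]

theorem sum_antidiagonal_two_mul_of_odd_eq_zero {A : Type*} [AddCommMonoid A] {f : ℕ × ℕ → A}
    (hf : ∀ p, Odd p.1 → f p = 0) (n : ℕ) :
    ∑ p ∈ antidiagonal (2 * n), f p = ∑ p ∈ antidiagonal n, f (2 * p.1, 2 * p.2) := by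
  refine (sum_of_injOn (fun p : ℕ × ℕ => (2 * p.1, 2 * p.2)) ?_ ?_ ?_ fun _ _ => rfl).symm
  · rintro ⟨i, j⟩ - ⟨i', j'⟩ - h
    simp only [Prod.mk.injEq] at h ⊢
    omega
  · rintro ⟨i, j⟩ h
    simp only [mem_coe, HasAntidiagonal.mem_antidiagonal] at h ⊢
    omega
  · rintro ⟨i, j⟩ h h_image
    refine hf _ (Nat.not_even_iff_odd.mp fun ⟨k, hk⟩ => h_image ⟨(k, n - k), ?_⟩)
    simp only [mem_coe, HasAntidiagonal.mem_antidiagonal, Prod.mk.injEq] at h hk ⊢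
    omega

theorem six_mul_sum_antidiagonal_linear_mul_linear {R : Type*} [CommRing R] (a b c : R) (n : ℕ) :
    6 * ∑ p ∈ antidiagonal n, (c * p.1 + a) * (c * p.2 + b)
      = (n + 1) * (c ^ 2 * n * (n - 1) + 3 * c * (a + b) * n + 6 * a * b) := by
  induction n generalizing b with
  | zero =>
    simp only [Nat.antidiagonal_zero, sum_singleton, Nat.cast_zero]
    ring
  | succ n ih =>
    have h_shift : ∀ j : ℕ, c * ((j + 1 : ℕ) : R) + b = c * j + (c + b) := fun j => by
      push_cast; ring
    simp only [Nat.sum_antidiagonal_succ', h_shift]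
    rw [mul_add, ih]
    push_cast
    ring

end FiniteSums

section BernoulliSeries

open PowerSeries Finset

/-- The Euler operator `θ = X d/dX` on formal power series, as a derivation. -/
noncomputable def eulerDerivation (R : Type*) [CommSemiring R] : Derivation R R⟦X⟧ R⟦X⟧ :=
  (X : R⟦X⟧) • d⁄dX R

theorem eulerDerivation_apply {R : Type*} [CommSemiring R] (f : R⟦X⟧) :
    eulerDerivation R f = X * d⁄dX R f := rfl

theorem eulerDerivation_X (R : Type*) [CommSemiring R] : eulerDerivation R X = X := by
  rw [eulerDerivation_apply, derivative_X, mul_one]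

theorem coeff_eulerDerivation {R : Type*} [CommSemiring R] (f : R⟦X⟧) (n : ℕ) :
    coeff n (eulerDerivation R f) = n * coeff n f := by
  cases n with
  | zero => simp [eulerDerivation_apply]
  | succ n =>
    rw [eulerDerivation_apply, coeff_succ_X_mul, coeff_derivative, Nat.cast_succ, mul_comm]

theorem coeff_two_mul_mul {R : Type*} [Semiring R] {f : R⟦X⟧}
    (hf : ∀ n, Odd n → coeff n f = 0) (g : R⟦X⟧) (n : ℕ) :
    coeff (2 * n) (f * g) = ∑ p ∈ antidiagonal n, coeff (2 * p.1) f * coeff (2 * p.2) g := by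
  rw [coeff_mul, sum_antidiagonal_two_mul_of_odd_eq_zero fun p hp => by rw [hf _ hp, zero_mul]]

variable (A : Type*) [CommRing A] [Algebra ℚ A]

/-- The power series `X² eˣ / (eˣ - 1)²` of `(x / 2)² / sinh² (x / 2)`. It is written in terms of
`B = X / (eˣ - 1)`, for which `B + X = X eˣ / (eˣ - 1)`. -/
noncomputable def halfCschSqSeries : A⟦X⟧ :=
  bernoulliPowerSeries A * (bernoulliPowerSeries A + X)

theorem eulerDerivation_bernoulliPowerSeries :
    eulerDerivation A (bernoulliPowerSeries A) = bernoulliPowerSeries A - halfCschSqSeries A := by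
  have h := bernoulliPowerSeries_mul_exp_sub_one A
  have h_deriv := congrArg (d⁄dX A) h
  rw [Derivation.leibniz, map_sub, derivative_X, derivative_exp, derivative_one] at h_deriv
  simp only [smul_eq_mul, sub_zero] at h_deriv
  rw [eulerDerivation_apply, halfCschSqSeries]
  linear_combination bernoulliPowerSeries A * h_deriv
    - (d⁄dX A (bernoulliPowerSeries A) + bernoulliPowerSeries A) * h

theorem eulerDerivation_halfCschSqSeries :
    eulerDerivation A (halfCschSqSeries A)
      = 2 * halfCschSqSeries A - (2 * bernoulliPowerSeries A + X) * halfCschSqSeries A := by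
  rw [halfCschSqSeries, Derivation.leibniz, map_add, eulerDerivation_X,
    eulerDerivation_bernoulliPowerSeries, halfCschSqSeries]
  simp only [smul_eq_mul]
  ring

theorem eulerDerivation_eulerDerivation_halfCschSqSeries :
    eulerDerivation A (eulerDerivation A (halfCschSqSeries A))
      = 5 * eulerDerivation A (halfCschSqSeries A) - 6 * halfCschSqSeries A
        + 6 * halfCschSqSeries A ^ 2 + X ^ 2 * halfCschSqSeries A := by
  have h_two : eulerDerivation A 2 = 0 := by
    simpa using (eulerDerivation A).map_natCast 2
  have h_coth : eulerDerivation A (2 * bernoulliPowerSeries A + X)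
      = 2 * bernoulliPowerSeries A + X - 2 * halfCschSqSeries A := by
    rw [map_add, Derivation.leibniz, h_two, eulerDerivation_X,
      eulerDerivation_bernoulliPowerSeries]
    simp only [smul_eq_mul]
    ring
  have h_sq : (2 * bernoulliPowerSeries A + X) ^ 2 = 4 * halfCschSqSeries A + X ^ 2 := by
    rw [halfCschSqSeries]; ring
  rw [eulerDerivation_halfCschSqSeries, map_sub, Derivation.leibniz, Derivation.leibniz, h_two,
    h_coth, eulerDerivation_halfCschSqSeries]
  simp only [smul_eq_mul]
  linear_combination halfCschSqSeries A * h_sq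

theorem coeff_halfCschSqSeries (n : ℕ) :
    coeff n (halfCschSqSeries A) = (1 - n) * algebraMap ℚ A (bernoulli n / n.factorial) := by
  have h : halfCschSqSeries A
      = bernoulliPowerSeries A - eulerDerivation A (bernoulliPowerSeries A) := by
    rw [eulerDerivation_bernoulliPowerSeries]; ring
  rw [h, map_sub, coeff_eulerDerivation, bernoulliPowerSeries, coeff_mk]
  ring

theorem coeff_halfCschSqSeries_of_odd {n : ℕ} (hn : Odd n) :
    coeff n (halfCschSqSeries A) = 0 := by
  rw [coeff_halfCschSqSeries]
  rcases eq_or_ne n 1 with rfl | h_ne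
  · simp
  · rw [bernoulli_eq_zero_of_odd hn (by have := hn.pos; omega), zero_div, map_zero, mul_zero]

theorem coeff_zero_halfCschSqSeries : coeff 0 (halfCschSqSeries A) = 1 := by
  simp [coeff_halfCschSqSeries]

theorem twelve_mul_coeff_two_halfCschSqSeries : 12 * coeff 2 (halfCschSqSeries A) = -1 := by
  have h : (12 : A) * algebraMap ℚ A (bernoulli 2 / (2 : ℕ).factorial) = 1 := by
    rw [← map_ofNat (algebraMap ℚ A) 12, ← map_mul, bernoulli_two, ← map_one (algebraMap ℚ A)]
    norm_num
  rw [coeff_halfCschSqSeries]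
  push_cast
  linear_combination -h

theorem coeff_add_two_halfCschSqSeries (n : ℕ) :
    (n * (n - 1) : A) * coeff (n + 2) (halfCschSqSeries A)
      = 6 * coeff (n + 2) (halfCschSqSeries A * halfCschSqSeries A)
        + coeff n (halfCschSqSeries A) := by
  have h := congrArg (coeff (n + 2)) (eulerDerivation_eulerDerivation_halfCschSqSeries A)
  rw [sq (halfCschSqSeries A), show (5 : A⟦X⟧) = C 5 from (map_ofNat C 5).symm,
    show (6 : A⟦X⟧) = C 6 from (map_ofNat C 6).symm] at h
  simp only [map_add, map_sub, coeff_C_mul, coeff_X_pow_mul, coeff_eulerDerivation] at h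
  push_cast at h
  linear_combination h

theorem six_mul_sum_coeff_mul_coeff_halfCschSqSeries (n : ℕ) :
    6 * ∑ p ∈ antidiagonal n, coeff (2 * (p.1 + 2)) (halfCschSqSeries A)
        * coeff (2 * (p.2 + 2)) (halfCschSqSeries A)
      = 2 * (n + 1) * (2 * n + 9) * coeff (2 * (n + 4)) (halfCschSqSeries A) := by
  have h := coeff_add_two_halfCschSqSeries A (2 * (n + 3))
  rw [show 2 * (n + 3) + 2 = 2 * (n + 4) by ring,
    coeff_two_mul_mul fun _ => coeff_halfCschSqSeries_of_odd A,
    Nat.sum_antidiagonal_succ, Nat.sum_antidiagonal_succ', Nat.sum_antidiagonal_succ,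
    Nat.sum_antidiagonal_succ'] at h
  simp only [zero_add, mul_zero, mul_one, coeff_zero_halfCschSqSeries, add_assoc,
    Nat.reduceAdd] at h
  push_cast at h
  have h_two := twelve_mul_coeff_two_halfCschSqSeries A
  linear_combination -h - coeff (2 * (n + 3)) (halfCschSqSeries A) * h_two

end BernoulliSeries

section ZetaValues

open Finset Complex
open scoped Real

theorem two_mul_sub_one_mul_riemannZeta (k : ℕ) :
    (2 * k - 1) * riemannZeta (2 * k)
      = (2 * π * I) ^ (2 * k) / 2 * PowerSeries.coeff (2 * k) (halfCschSqSeries ℂ) := by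
  have h_two : (2 : ℂ) ^ (2 * k - 1 : ℤ) = 2 ^ (2 * k) / 2 := by
    rw [zpow_sub_one₀ two_ne_zero, div_eq_mul_inv]
    norm_cast
  have h_I : (2 * π * I) ^ (2 * k) = (-1) ^ k * 2 ^ (2 * k) * (π : ℂ) ^ (2 * k) := by
    rw [mul_pow, mul_pow, pow_mul I, I_sq]
    ring
  rw [riemannZeta_two_mul_nat', coeff_halfCschSqSeries, h_two, h_I, eq_ratCast]
  push_cast
  ring

theorem six_mul_sum_riemannZeta_mul_riemannZeta (n : ℕ) :
    6 * ∑ p ∈ antidiagonal n, (2 * p.1 + 3) * (2 * p.2 + 3)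
        * (riemannZeta (2 * (p.1 + 2)) * riemannZeta (2 * (p.2 + 2)))
      = (n + 1) * (2 * n + 7) * (2 * n + 9) * riemannZeta (2 * (n + 4)) := by
  have h_term : ∀ p ∈ antidiagonal n, (2 * p.1 + 3 : ℂ) * (2 * p.2 + 3)
        * (riemannZeta (2 * (p.1 + 2)) * riemannZeta (2 * (p.2 + 2)))
      = (2 * π * I) ^ (2 * (n + 4)) / 4
        * (PowerSeries.coeff (2 * (p.1 + 2)) (halfCschSqSeries ℂ)
          * PowerSeries.coeff (2 * (p.2 + 2)) (halfCschSqSeries ℂ)) := by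
    rintro ⟨i, j⟩ h_mem
    obtain rfl : i + j = n := HasAntidiagonal.mem_antidiagonal.mp h_mem
    have hi := two_mul_sub_one_mul_riemannZeta (i + 2)
    have hj := two_mul_sub_one_mul_riemannZeta (j + 2)
    push_cast at hi hj
    calc (2 * i + 3 : ℂ) * (2 * j + 3) * (riemannZeta (2 * (i + 2)) * riemannZeta (2 * (j + 2)))
        = ((2 * (i + 2) - 1) * riemannZeta (2 * (i + 2)))
          * ((2 * (j + 2) - 1) * riemannZeta (2 * (j + 2))) := by ring
      _ = _ := by rw [hi, hj]; ring
  have h_coeff := six_mul_sum_coeff_mul_coeff_halfCschSqSeries ℂ n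
  have h_zeta := two_mul_sub_one_mul_riemannZeta (n + 4)
  push_cast at h_zeta
  rw [sum_congr rfl h_term, ← mul_sum]
  linear_combination (2 * π * I) ^ (2 * (n + 4)) / 4 * h_coeff
    - (n + 1 : ℂ) * (2 * n + 9) * h_zeta

end ZetaValues

section HarmonicProduct

open Finset

/-- The decomposition of `ℕ × ℕ` into the pairs above, below and on the diagonal, where an
off-diagonal pair is encoded by its smaller entry and the gap, diminished by one. -/
noncomputable def diagonalSplit : (ℕ × ℕ ⊕ ℕ × ℕ) ⊕ ℕ ≃ ℕ × ℕ :=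
  Equiv.ofBijective
    (Sum.elim (Sum.elim (fun p => (p.1, p.1 + p.2 + 1)) (fun p => (p.1 + p.2 + 1, p.1)))
      fun m => (m, m)) <| by
    constructor
    · rintro ((⟨a, b⟩ | ⟨a, b⟩) | a) ((⟨c, d⟩ | ⟨c, d⟩) | c) h <;>
        simp only [Sum.elim_inl, Sum.elim_inr, Prod.mk.injEq, Sum.inl.injEq, Sum.inr.injEq,
          reduceCtorEq] at h ⊢ <;> omega
    · rintro ⟨a, b⟩
      rcases lt_trichotomy a b with h | h | h
      · exact ⟨.inl (.inl (a, b - a - 1)), Prod.ext rfl (by simp only [Sum.elim_inl]; omega)⟩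
      · exact ⟨.inr a, Prod.ext rfl h⟩
      · exact ⟨.inl (.inr (b, a - b - 1)),
          Prod.ext (by simp only [Sum.elim_inl, Sum.elim_inr]; omega) rfl⟩

theorem tsum_eq_tsum_lt_add_tsum_gt_add_tsum_diag {E : Type*} [AddCommGroup E] [UniformSpace E]
    [IsUniformAddGroup E] [CompleteSpace E] [T2Space E] {f : ℕ × ℕ → E} (hf : Summable f) :
    ∑' p, f p = ∑' p : ℕ × ℕ, f (p.1, p.1 + p.2 + 1) + ∑' p : ℕ × ℕ, f (p.1 + p.2 + 1, p.1)
      + ∑' m, f (m, m) := by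
  have h := diagonalSplit.summable_iff.mpr hf
  have h_off := h.comp_injective Sum.inl_injective
  rw [← diagonalSplit.tsum_eq]
  exact (h_off.tsum_sum (h.comp_injective Sum.inr_injective)).trans <| congrArg (· + _) <|
    (h_off.comp_injective Sum.inl_injective).tsum_sum (h_off.comp_injective Sum.inr_injective)

theorem summable_norm_one_div_nat_add_one_pow {k : ℕ} (hk : 1 < k) :
    Summable fun n : ℕ => ‖1 / ((n : ℂ) + 1) ^ k‖ := by
  refine ((summable_nat_add_iff 1).mpr (Real.summable_one_div_nat_pow.mpr hk)).congr fun n => ?_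
  rw [norm_div, norm_pow, norm_one, ← Nat.cast_add_one, Complex.norm_natCast]

theorem riemannZeta_natCast_eq_tsum {k : ℕ} (hk : 1 < k) :
    riemannZeta k = ∑' n : ℕ, 1 / ((n : ℂ) + 1) ^ k := by
  rw [zeta_eq_tsum_one_div_nat_add_one_cpow (by simpa using hk)]
  simp only [Complex.cpow_natCast]

theorem riemannZeta_mul_riemannZeta {a b : ℕ} (ha : 1 < a) (hb : 1 < b) :
    riemannZeta a * riemannZeta b = zeta2 a b + zeta2 b a + riemannZeta (a + b : ℕ) := by
  have h_norm_a := summable_norm_one_div_nat_add_one_pow ha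
  have h_norm_b := summable_norm_one_div_nat_add_one_pow hb
  have h_mul := summable_mul_of_summable_norm h_norm_a h_norm_b
  rw [riemannZeta_natCast_eq_tsum ha, riemannZeta_natCast_eq_tsum hb,
    riemannZeta_natCast_eq_tsum (by omega), tsum_mul_tsum_of_summable_norm h_norm_a h_norm_b,
    tsum_eq_tsum_lt_add_tsum_gt_add_tsum_diag h_mul, zeta2, zeta2]
  refine congrArg₂ _ (congrArg₂ _ (tsum_congr fun p => ?_) (tsum_congr fun p => ?_))
    (tsum_congr fun m => ?_)
  · push_cast
    ring
  · push_cast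
    ring
  · rw [one_div_mul_one_div, pow_add]

theorem sum_antidiagonal_mul_riemannZeta_mul_riemannZeta {n k : ℕ} {u : ℕ → ℕ} {w : ℕ × ℕ → ℂ}
    (hu : ∀ i, 1 < u i) (hk : ∀ p ∈ antidiagonal n, u p.1 + u p.2 = k)
    (hw : ∀ p, w p.swap = w p) :
    ∑ p ∈ antidiagonal n, w p * (riemannZeta (u p.1) * riemannZeta (u p.2))
      = 2 * ∑ p ∈ antidiagonal n, w p * zeta2 (u p.2) (u p.1)
        + (∑ p ∈ antidiagonal n, w p) * riemannZeta k := by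
  have h_swap : ∑ p ∈ antidiagonal n, w p * zeta2 (u p.1) (u p.2)
      = ∑ p ∈ antidiagonal n, w p * zeta2 (u p.2) (u p.1) := by
    rw [← Nat.sum_antidiagonal_swap]
    simp only [hw, Prod.fst_swap, Prod.snd_swap]
  calc ∑ p ∈ antidiagonal n, w p * (riemannZeta (u p.1) * riemannZeta (u p.2))
      = ∑ p ∈ antidiagonal n, (w p * zeta2 (u p.1) (u p.2) + w p * zeta2 (u p.2) (u p.1)
          + w p * riemannZeta k) := sum_congr rfl fun p hp => by
        rw [riemannZeta_mul_riemannZeta (hu _) (hu _), hk p hp, mul_add, mul_add]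
    _ = _ := by rw [sum_add_distrib, sum_add_distrib, h_swap, ← sum_mul, two_mul]

theorem sum_antidiagonal_odd_mul_odd_mul_zeta2 (n : ℕ) :
    ∑ p ∈ antidiagonal n,
        (2 * p.1 + 3) * (2 * p.2 + 3) * zeta2 (2 * (p.2 + 2)) (2 * (p.1 + 2))
      = 3 / 4 * (n + 1) * riemannZeta (2 * (n + 4)) := by
  have h_harmonic := sum_antidiagonal_mul_riemannZeta_mul_riemannZeta (n := n) (k := 2 * (n + 4))
    (u := fun i => 2 * (i + 2)) (w := fun p => (2 * p.1 + 3) * (2 * p.2 + 3))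
    (fun i => by omega) (fun p hp => by rw [← HasAntidiagonal.mem_antidiagonal.mp hp]; ring)
    (fun p => mul_comm _ _)
  have h_conv := six_mul_sum_riemannZeta_mul_riemannZeta n
  have h_weight := six_mul_sum_antidiagonal_linear_mul_linear (3 : ℂ) 3 2 n
  push_cast at h_harmonic
  linear_combination 1 / 12 * h_conv - 1 / 2 * h_harmonic
    - riemannZeta (2 * (n + 4)) / 12 * h_weight

end HarmonicProduct

theorem Nakamura_second_weighted_sum_formula (M : ℕ) (hM : 4 ≤ M) :
    ∑ ν ∈ Finset.Icc 2 (M - 2),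
        ((2 * ν - 1 : ℕ) : ℂ) * ((2 * M - 2 * ν - 1 : ℕ) : ℂ) * zeta2 (2 * M - 2 * ν) (2 * ν)
      = (3 / 4 : ℂ) * ((M : ℂ) - 3) * riemannZeta (2 * M) := by
  obtain ⟨n, rfl⟩ : ∃ n, M = n + 4 := ⟨M - 4, by omega⟩
  rw [show n + 4 - 2 = n + 2 from rfl, sum_Icc_eq_sum_antidiagonal]
  have h_term : ∀ p ∈ Finset.HasAntidiagonal.antidiagonal n,
      ((2 * (p.1 + 2) - 1 : ℕ) : ℂ) * ((2 * (n + 4) - 2 * (p.1 + 2) - 1 : ℕ) : ℂ)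
          * zeta2 (2 * (n + 4) - 2 * (p.1 + 2)) (2 * (p.1 + 2))
        = (2 * p.1 + 3) * (2 * p.2 + 3) * zeta2 (2 * (p.2 + 2)) (2 * (p.1 + 2)) := by
    intro p hp
    rw [Finset.HasAntidiagonal.mem_antidiagonal] at hp
    rw [show 2 * (p.1 + 2) - 1 = 2 * p.1 + 3 by omega,
      show 2 * (n + 4) - 2 * (p.1 + 2) - 1 = 2 * p.2 + 3 by omega,
      show 2 * (n + 4) - 2 * (p.1 + 2) = 2 * (p.2 + 2) by omega]
    push_cast
    rfl
  rw [Finset.sum_congr rfl h_term, sum_antidiagonal_odd_mul_odd_mul_zeta2]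
  push_cast
  ring
end

section
/- For every positive integer k, ∑_{ν=1}^{k} ∑_{m,n≥1, m≡n (mod 3)} 1/(n^ν (m+n)^{k+2−ν}) = ζ(k+2)/3^{k+2} + (π/(3√3)) L(k+1; χ₃), where χ₃ is the nontrivial Dirichlet character modulo 3 and L(s;χ₃) = ∑_{n≥1} χ₃(n)/n^s. -/
/-!
For fixed `m` and `n`, summing the geometric progression in `ν` turns the summand into
`1 / (m n ^ k (m + n)) - 1 / (m (m + n) ^ (k + 1))`.

In the first series, fix `n`; there `1 / (m (m + n)) = (1 / m - 1 / (m + n)) / n`. If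
`m ≡ n (mod 3)` then `m + n ≡ -n`, and `[m ≡ n] - [m ≡ -n] = χ₃(m) χ₃(n)`; hence the sum over `m`
of `1 / m - 1 / (m + n)` telescopes to `χ₃(n) L(1; χ₃)` plus the sum of `1 / m` over `m ≤ n`,
`m ≡ -n`. In the second series, group the terms by the value `s` of `m + n`: the condition is
`m ≡ -s`, and the sum of `1 / m` runs over `m < s`. For `s = n` the two sums differ by the term
`m = n`, present exactly when `3 ∣ n`, which contributes `ζ(k + 2) / 3 ^ (k + 2)`.

Finally `L(1; χ₃) = π / (3√3)` is the cotangent expansion at `1 / 3`.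
-/

open scoped BigOperators Real

/-- The nontrivial (quadratic) Dirichlet character of conductor 3. -/
noncomputable def chi3 (n : ℕ) : ℂ :=
  if n % 3 = 1 then 1 else if n % 3 = 2 then -1 else 0

open Filter Topology Finset

section Series

lemma tendsto_sum_range_sub_add {E : Type*} [AddCommGroup E] [TopologicalSpace E]
    [IsTopologicalAddGroup E] {g : ℕ → E} (hg : Tendsto g atTop (𝓝 0)) (q : ℕ) :
    Tendsto (fun M ↦ ∑ i ∈ range M, (g i - g (i + q))) atTop (𝓝 (∑ i ∈ range q, g i)) := by
  have htail : Tendsto (fun M ↦ ∑ i ∈ range q, g (M + i)) atTop (𝓝 0) := by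
    simpa using tendsto_finsetSum (range q) fun i _ ↦ hg.comp (tendsto_add_atTop_nat i)
  have hsum (M : ℕ) : ∑ i ∈ range M, (g i - g (i + q))
      = ∑ i ∈ range q, g i - ∑ i ∈ range q, g (M + i) := by
    have hcomm : ∑ i ∈ range (M + q), g i = ∑ i ∈ range (q + M), g i := by rw [add_comm]
    rw [sum_range_add, sum_range_add] at hcomm
    simp_rw [sum_sub_distrib, add_comm _ q]
    rw [sub_eq_sub_iff_add_eq_add, hcomm]
  simpa only [hsum, sub_zero] using htail.const_sub (∑ i ∈ range q, g i)

lemma hasSum_sum_antidiagonal {A E : Type*} [AddCommMonoid A] [HasAntidiagonal A]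
    [AddCommMonoid E] [TopologicalSpace E] [ContinuousAdd E] [RegularSpace E]
    {f : A × A → E} {a : E} (hf : HasSum f a) :
    HasSum (fun n ↦ ∑ p ∈ antidiagonal n, f p) a :=
  (HasAntidiagonal.sigmaAntidiagonalEquivProd.hasSum_iff.2 hf).sigma
    fun n ↦ (antidiagonal n).hasSum f

lemma hasSum_ite_dvd_one_div_add_one_pow {s N : ℕ} (hs : 1 < s) (hN : N ≠ 0) :
    HasSum (fun n : ℕ ↦ if N ∣ n + 1 then 1 / ((n : ℂ) + 1) ^ s else 0)
      (riemannZeta s / N ^ s) := by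
  have hζ : HasSum (fun n : ℕ ↦ 1 / (n : ℂ) ^ s) (riemannZeta s) := by
    rw [zeta_nat_eq_tsum_of_gt_one hs]
    refine Summable.hasSum (.of_norm ?_)
    simpa using Real.summable_one_div_nat_pow.2 hs
  have hmul : HasSum (fun n : ℕ ↦ if N ∣ n then 1 / (n : ℂ) ^ s else 0)
      (riemannZeta s / N ^ s) := by
    rw [← (mul_right_injective₀ hN).hasSum_iff]
    · convert! hζ.div_const ((N : ℂ) ^ s) using 2 with n
      simp [mul_pow, div_eq_mul_inv]
    · intro n hn
      exact if_neg fun ⟨m, hm⟩ ↦ hn ⟨m, hm.symm⟩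
  have hs0 : s ≠ 0 := by lia
  simpa [hs0] using (hasSum_nat_add_iff' 1).2 hmul

end Series

section MordellTornheim

lemma sum_Icc_pow_mul_pow_mul_sub {R : Type*} [CommRing R] (x y : R) (k : ℕ) :
    (∑ ν ∈ Icc 1 k, x ^ ν * y ^ (k + 2 - ν)) * (x - y) = x * y ^ 2 * (x ^ k - y ^ k) := by
  rw [← geom_sum₂_mul, ← mul_assoc, mul_sum, ← Ico_add_one_right_eq_Icc, sum_Ico_eq_sum_range,
    add_tsub_cancel_right]
  congr 1
  refine sum_congr rfl fun i hi ↦ ?_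
  have hexp : k + 2 - (1 + i) = 2 + (k - 1 - i) := by
    have := mem_range.1 hi
    lia
  rw [hexp]
  ring

lemma sum_Icc_one_div_pow_mul_add_pow {K : Type*} [Field K] {m n : K} (hm : m ≠ 0) (hn : n ≠ 0)
    (hmn : m + n ≠ 0) (k : ℕ) :
    ∑ ν ∈ Icc 1 k, 1 / (n ^ ν * (m + n) ^ (k + 2 - ν))
      = 1 / (m * n ^ k * (m + n)) - 1 / (m * (m + n) ^ (k + 1)) := by
  have hsub : n⁻¹ - (m + n)⁻¹ = m * (n⁻¹ * (m + n)⁻¹) := by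
    field_simp
    ring
  have hne : n⁻¹ - (m + n)⁻¹ ≠ 0 := by
    rw [hsub]
    exact mul_ne_zero hm (mul_ne_zero (inv_ne_zero hn) (inv_ne_zero hmn))
  apply mul_right_cancel₀ hne
  simp_rw [one_div, mul_inv (n ^ _), ← inv_pow]
  rw [sum_Icc_pow_mul_pow_mul_sub, hsub]
  simp only [inv_pow]
  field_simp
  ring

lemma le_pow_mul_pow {x y : ℝ} {a b : ℕ} (hx : 1 ≤ x) (hxy : x ≤ y) (hab : a + b ≠ 0) :
    x ≤ x ^ a * y ^ b :=
  calc x ≤ x ^ (a + b) := le_self_pow₀ hx hab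
    _ = x ^ a * x ^ b := pow_add x a b
    _ ≤ x ^ a * y ^ b := by gcongr

lemma mul_mul_add_le_pow_mul_pow_mul_add_pow {x y : ℝ} {a b c : ℕ} (hx : 1 ≤ x) (hy : 1 ≤ y)
    (hc : 1 ≤ c) (hac : 2 ≤ a + c) (hbc : 2 ≤ b + c) (habc : 3 ≤ a + b + c) :
    x * y * (x + y) ≤ x ^ a * y ^ b * (x + y) ^ c := by
  obtain ⟨d, e, rfl, hd, he⟩ : ∃ d e, c = d + e + 1 ∧ a + d ≠ 0 ∧ b + e ≠ 0 :=
    ⟨1 - a, c - 1 - (1 - a), by lia, by lia, by lia⟩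
  calc x * y * (x + y)
      ≤ (x ^ a * (x + y) ^ d) * (y ^ b * (x + y) ^ e) * (x + y) := by
        gcongr
        · exact le_pow_mul_pow hx (by linarith) hd
        · exact le_pow_mul_pow hy (by linarith) he
    _ = x ^ a * y ^ b * (x + y) ^ (d + e + 1) := by ring

lemma rpow_three_halves_mul_le_mul_mul_add {x y : ℝ} (hx : 0 ≤ x) (hy : 0 ≤ y) :
    x ^ (3 / 2 : ℝ) * y ^ (3 / 2 : ℝ) ≤ x * y * (x + y) := by
  have hrpow {z : ℝ} (hz : 0 ≤ z) : z ^ (3 / 2 : ℝ) = z * z ^ (1 / 2 : ℝ) := by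
    rw [← Real.rpow_one_add' hz (by norm_num)]
    norm_num
  have hamgm : x ^ (1 / 2 : ℝ) * y ^ (1 / 2 : ℝ) ≤ 1 / 2 * x + 1 / 2 * y :=
    Real.geom_mean_le_arith_mean2_weighted (by norm_num) (by norm_num) hx hy (by norm_num)
  calc x ^ (3 / 2 : ℝ) * y ^ (3 / 2 : ℝ)
      = x * y * (x ^ (1 / 2 : ℝ) * y ^ (1 / 2 : ℝ)) := by rw [hrpow hx, hrpow hy]; ring
    _ ≤ x * y * (x + y) := by gcongr; linarith

lemma summable_one_div_mul_mul_add :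
    Summable fun p : ℕ × ℕ ↦
      1 / (((p.1 : ℝ) + 1) * (p.2 + 1) * (p.1 + 1 + (p.2 + 1))) := by
  have h : Summable fun i : ℕ ↦ 1 / ((i : ℝ) + 1) ^ (3 / 2 : ℝ) := by
    exact_mod_cast (summable_nat_add_iff 1).2
      (Real.summable_one_div_nat_rpow.2 (by norm_num : (1 : ℝ) < 3 / 2))
  have hnonneg (i : ℕ) : 0 ≤ 1 / ((i : ℝ) + 1) ^ (3 / 2 : ℝ) := by positivity
  refine .of_nonneg_of_le (fun p ↦ by positivity) (fun p ↦ ?_)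
    (h.mul_of_nonneg h hnonneg hnonneg)
  rw [one_div_mul_one_div]
  refine one_div_le_one_div_of_le (by positivity) ?_
  exact rpow_three_halves_mul_le_mul_mul_add (by positivity) (by positivity)

/-- The summand `1 / (m ^ a * n ^ b * (m + n) ^ c)` of the Mordell–Tornheim double series,
restricted to the pairs with `m ≡ n (mod N)`. The pair `p : ℕ × ℕ` encodes the positive integers
`m = p.1 + 1` and `n = p.2 + 1`. -/
noncomputable def tornheimTerm (N a b c : ℕ) (p : ℕ × ℕ) : ℂ :=
  if (p.1 + 1) % N = (p.2 + 1) % N then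
    1 / (((p.1 : ℂ) + 1) ^ a * ((p.2 : ℂ) + 1) ^ b * ((p.1 : ℂ) + 1 + ((p.2 : ℂ) + 1)) ^ c)
  else 0

lemma summable_tornheimTerm (N : ℕ) {a b c : ℕ} (hc : 1 ≤ c) (hac : 2 ≤ a + c) (hbc : 2 ≤ b + c)
    (habc : 3 ≤ a + b + c) : Summable (tornheimTerm N a b c) := by
  refine .of_norm_bounded summable_one_div_mul_mul_add fun p ↦ ?_
  unfold tornheimTerm
  split_ifs
  · have hnorm : ‖1 / (((p.1 : ℂ) + 1) ^ a * ((p.2 : ℂ) + 1) ^ b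
        * ((p.1 : ℂ) + 1 + ((p.2 : ℂ) + 1)) ^ c)‖
        = 1 / (((p.1 : ℝ) + 1) ^ a * (p.2 + 1) ^ b * (p.1 + 1 + (p.2 + 1)) ^ c) := by
      rw [← Complex.norm_of_nonneg (r := 1 / _) (by positivity)]
      push_cast
      rfl
    rw [hnorm]
    refine one_div_le_one_div_of_le (by positivity) ?_
    exact mul_mul_add_le_pow_mul_pow_mul_add_pow (by simp) (by simp) hc hac hbc habc
  · rw [norm_zero]
    positivity

lemma sum_Icc_tornheimTerm (N k : ℕ) (p : ℕ × ℕ) :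
    ∑ ν ∈ Icc 1 k, tornheimTerm N 0 ν (k + 2 - ν) p
      = tornheimTerm N 1 k 1 p - tornheimTerm N 1 0 (k + 1) p := by
  unfold tornheimTerm
  split_ifs
  · simpa using sum_Icc_one_div_pow_mul_add_pow (p.1.cast_add_one_ne_zero (R := ℂ))
      p.2.cast_add_one_ne_zero (by exact_mod_cast (by lia : p.1 + 1 + (p.2 + 1) ≠ 0)) k
  · simp

lemma sum_Icc_tsum_tornheimTerm (N : ℕ) {k : ℕ} (hk : 1 ≤ k) :
    ∑ ν ∈ Icc 1 k, ∑' p, tornheimTerm N 0 ν (k + 2 - ν) p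
      = ∑' p, tornheimTerm N 1 k 1 p - ∑' p, tornheimTerm N 1 0 (k + 1) p := by
  rw [← Summable.tsum_finsetSum, ← Summable.tsum_sub]
  · simp_rw [sum_Icc_tornheimTerm]
  · exact summable_tornheimTerm N (by lia) (by lia) (by lia) (by lia)
  · exact summable_tornheimTerm N (by lia) (by lia) (by lia) (by lia)
  · intro ν hν
    have := mem_Icc.1 hν
    exact summable_tornheimTerm N (by lia) (by lia) (by lia) (by lia)

end MordellTornheim

section Character

lemma chi3_mul_chi3 (m n : ℕ) :
    chi3 m * chi3 n = (if m % 3 = n % 3 then 1 else 0) - (if 3 ∣ m + n then 1 else 0) := by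
  have hm : m % 3 < 3 := by lia
  have hn : n % 3 < 3 := by lia
  have hdvd : 3 ∣ m + n ↔ (m % 3 + n % 3) % 3 = 0 := by lia
  simp only [hdvd, chi3]
  generalize m % 3 = r at hm
  generalize n % 3 = s at hn
  interval_cases r <;> interval_cases s <;> norm_num

lemma norm_chi3_le_one (n : ℕ) : ‖chi3 n‖ ≤ 1 := by
  unfold chi3
  split_ifs <;> simp

lemma sum_range_chi3 (n : ℕ) :
    ∑ i ∈ range n, chi3 (i + 1) = if n % 3 = 1 then 1 else 0 := by
  induction n with
  | zero => simp
  | succ n ih =>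
    rw [sum_range_succ, ih, chi3]
    split_ifs <;> first | lia | simp

lemma summable_chi3_div_pow {s : ℕ} (hs : 1 < s) :
    Summable fun n : ℕ ↦ chi3 (n + 1) / ((n : ℂ) + 1) ^ s := by
  refine .of_norm_bounded
    ((summable_nat_add_iff 1).2 (Real.summable_one_div_nat_pow.2 hs)) fun n ↦ ?_
  rw [norm_div, norm_pow, ← Nat.cast_add_one, Complex.norm_natCast]
  gcongr
  exact norm_chi3_le_one _

lemma tendsto_sum_range_one_div_add_sub_one_div_sub {x : ℂ} (hx : x ∈ Complex.integerComplement) :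
    Tendsto (fun J ↦ ∑ j ∈ range J, (1 / (x + j) - 1 / ((j : ℂ) + 1 - x))) atTop
      (𝓝 (π * Complex.cot (π * x))) := by
  have hzero : Tendsto (fun j : ℕ ↦ 1 / (x + j)) atTop (𝓝 0) := by
    simp_rw [one_div]
    exact tendsto_inv₀_cobounded.comp
      ((tendsto_const_add_cobounded x).comp tendsto_natCast_atTop_cobounded)
  have h := (tendsto_logDeriv_euler_cot_sub hx).add (tendsto_sum_range_sub_add hzero 1)
  simp only [sum_range_one, Nat.cast_zero, add_zero, sub_add_cancel, ← sum_add_distrib] at h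
  refine h.congr fun J ↦ sum_congr rfl fun j _ ↦ ?_
  rw [cotTerm, ← neg_sub x, one_div_neg_eq_neg_one_div]
  push_cast
  ring

lemma one_third_mem_integerComplement : (1 / 3 : ℂ) ∈ Complex.integerComplement := by
  rintro ⟨n, hn⟩
  have h : 3 * n = 1 := by
    have : (3 * n : ℂ) = 1 := by rw [hn]; norm_num
    exact_mod_cast this
  lia

lemma cot_pi_mul_one_third : Complex.cot (π * (1 / 3)) = 1 / √3 := by
  have h : (π : ℂ) * (1 / 3) = ((π / 3 : ℝ) : ℂ) := by push_cast; ring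
  rw [h, ← Complex.ofReal_cot, Real.cot_eq_cos_div_sin, Real.cos_pi_div_three,
    Real.sin_pi_div_three]
  push_cast
  field_simp

lemma sum_range_three_mul_chi3_div (J : ℕ) :
    ∑ i ∈ range (3 * J), chi3 (i + 1) / ((i : ℂ) + 1)
      = 1 / 3 * ∑ j ∈ range J, (1 / (1 / 3 + (j : ℂ)) - 1 / ((j : ℂ) + 1 - 1 / 3)) := by
  induction J with
  | zero => simp
  | succ J ih =>
    have h0 : chi3 (3 * J + 1) = 1 := if_pos (by lia)
    have h1 : chi3 (3 * J + 1 + 1) = -1 := by simp [chi3, add_assoc]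
    have h2 : chi3 (3 * J + 2 + 1) = 0 := by simp [chi3, add_assoc]
    have hz1 : (3 : ℂ) * J + 1 ≠ 0 := by exact_mod_cast (3 * J).succ_ne_zero
    have hz2 : (3 : ℂ) * J + 2 ≠ 0 := by exact_mod_cast (3 * J + 1).succ_ne_zero
    have hcast : ((3 * J + 1 : ℕ) : ℂ) + 1 = 3 * J + 2 := by push_cast; ring
    have hadd : 1 / 3 + (J : ℂ) = (3 * J + 1) / 3 := by ring
    have hsub : (J : ℂ) + 1 - 1 / 3 = (3 * J + 2) / 3 := by ring
    rw [sum_range_succ _ J, mul_add 3 J 1, mul_one, mul_add (1 / 3 : ℂ), ← ih, sum_range_succ,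
      sum_range_succ, sum_range_succ, h0, h1, h2, hcast, hadd, hsub, zero_div, add_zero, add_assoc]
    congr 1
    push_cast
    field_simp
    ring

lemma tendsto_sum_range_chi3_div :
    Tendsto (fun M ↦ ∑ i ∈ range M, chi3 (i + 1) / ((i : ℂ) + 1)) atTop
      (𝓝 (π / (3 * √3))) := by
  have hcauchy : CauchySeq fun M ↦ ∑ i ∈ range M, chi3 (i + 1) / ((i : ℂ) + 1) := by
    have hanti : Antitone fun i : ℕ ↦ 1 / ((i : ℝ) + 1) := fun i j hij ↦ by
      dsimp only
      gcongr
    have hbound (n : ℕ) : ‖∑ i ∈ range n, chi3 (i + 1)‖ ≤ 1 := by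
      rw [sum_range_chi3]
      split_ifs <;> simp
    convert hanti.cauchySeq_series_mul_of_tendsto_zero_of_bounded
      tendsto_one_div_add_atTop_nhds_zero_nat hbound using 4
    rw [Complex.real_smul]
    push_cast
    ring
  refine tendsto_nhds_of_cauchySeq_of_subseq hcauchy
    (tendsto_id.const_mul_atTop' (by norm_num : 0 < 3)) ?_
  have h := (tendsto_sum_range_one_div_add_sub_one_div_sub
    one_third_mem_integerComplement).const_mul (1 / 3)
  simp only [← sum_range_three_mul_chi3_div, cot_pi_mul_one_third] at h
  convert! h using 2
  ring

end Character

/-- The part `∑ 1 / m`, over `1 ≤ m ≤ n` with `m ≡ -n (mod 3)`, of the `n`-th harmonic number;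
the index `i` encodes `m = i + 1`. It is what the two sides of the telescoped double series have
in common. -/
noncomputable def oppositeHarmonic (n : ℕ) : ℂ :=
  ∑ i ∈ range n, if 3 ∣ i + 1 + n then 1 / ((i : ℂ) + 1) else 0

lemma tendsto_sum_range_congruent_one_div_sub (n : ℕ) :
    Tendsto (fun M ↦ ∑ i ∈ range M, if (i + 1) % 3 = n % 3 then
        1 / ((i : ℂ) + 1) - 1 / ((i : ℂ) + 1 + n) else 0) atTop
      (𝓝 (chi3 n * (π / (3 * √3)) + oppositeHarmonic n)) := by
  let g (i : ℕ) : ℂ := if 3 ∣ i + 1 + n then 1 / ((i : ℂ) + 1) else 0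
  have hg : Tendsto g atTop (𝓝 0) := by
    refine squeeze_zero_norm (fun i ↦ ?_) (tendsto_one_div_add_atTop_nhds_zero_nat (𝕜 := ℝ))
    simp only [g]
    split_ifs
    · rw [norm_div, norm_one, ← Nat.cast_add_one, Complex.norm_natCast, Nat.cast_add_one]
    · rw [norm_zero]
      positivity
  refine ((tendsto_sum_range_chi3_div.const_mul (chi3 n)).add
    (tendsto_sum_range_sub_add hg n)).congr fun M ↦ ?_
  rw [mul_sum, ← sum_add_distrib]
  refine sum_congr rfl fun i _ ↦ ?_
  have hshift : 3 ∣ i + n + 1 + n ↔ (i + 1) % 3 = n % 3 := by lia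
  rw [← mul_div_assoc, mul_comm (chi3 n), chi3_mul_chi3]
  simp only [g, hshift]
  push_cast
  split_ifs <;> ring

lemma hasSum_tornheimTerm_fiberwise_snd {k : ℕ} (hk : 1 ≤ k) :
    HasSum (fun t : ℕ ↦ (chi3 (t + 1) * (π / (3 * √3)) + oppositeHarmonic (t + 1))
      / ((t : ℂ) + 1) ^ (k + 1)) (∑' p, tornheimTerm 3 1 k 1 p) := by
  have hsum : Summable (tornheimTerm 3 1 k 1 ∘ Prod.swap) :=
    (Equiv.prodComm ℕ ℕ).summable_iff.2 (summable_tornheimTerm 3 (by lia) (by lia) (by lia)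
      (by lia))
  rw [← (Equiv.prodComm ℕ ℕ).tsum_eq]
  refine hsum.hasSum.prod_fiberwise fun t ↦ ?_
  have hfiber := hsum.prod_factor t
  rw [hfiber.hasSum_iff_tendsto_nat]
  refine ((tendsto_sum_range_congruent_one_div_sub (t + 1)).div_const _).congr fun M ↦ ?_
  rw [sum_div]
  refine sum_congr rfl fun i _ ↦ ?_
  have hi := i.cast_add_one_ne_zero (R := ℂ)
  have ht := t.cast_add_one_ne_zero (R := ℂ)
  have hit : (i : ℂ) + 1 + (t + 1) ≠ 0 := by exact_mod_cast (by lia : i + 1 + (t + 1) ≠ 0)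
  simp only [Function.comp_apply, Prod.swap, tornheimTerm]
  split_ifs
  · push_cast
    field_simp
    ring
  · simp

lemma sum_antidiagonal_tornheimTerm (k s : ℕ) :
    ∑ p ∈ antidiagonal s, tornheimTerm 3 1 0 k p
      = (oppositeHarmonic (s + 2) - if 3 ∣ s + 2 then 1 / ((s : ℂ) + 2) else 0)
        / ((s : ℂ) + 2) ^ k := by
  have hlast : 3 ∣ s + 1 + 1 + (s + 2) ↔ 3 ∣ s + 2 := by lia
  have hcast : ((s + 1 : ℕ) : ℂ) + 1 = s + 2 := by push_cast; ring
  rw [oppositeHarmonic, sum_range_succ]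
  simp only [hlast, hcast]
  rw [add_sub_cancel_right, sum_div, Nat.sum_antidiagonal_eq_sum_range_succ_mk]
  refine sum_congr rfl fun i hi ↦ ?_
  have his : i ≤ s := by simpa [Nat.lt_succ_iff] using hi
  have hmod : (i + 1) % 3 = (s - i + 1) % 3 ↔ 3 ∣ i + 1 + (s + 2) := by lia
  have hsum : (i : ℂ) + 1 + (s - i + 1) = s + 2 := by ring
  simp only [tornheimTerm, hmod, Nat.cast_sub his, hsum]
  split_ifs <;> simp [div_eq_mul_inv, mul_comm]

lemma hasSum_tornheimTerm_fiberwise_add {k : ℕ} (hk : 1 ≤ k) :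
    HasSum (fun t : ℕ ↦
      (oppositeHarmonic (t + 1) - if 3 ∣ t + 1 then 1 / ((t : ℂ) + 1) else 0)
        / ((t : ℂ) + 1) ^ (k + 1)) (∑' p, tornheimTerm 3 1 0 (k + 1) p) := by
  have hsum := hasSum_sum_antidiagonal (summable_tornheimTerm 3 (a := 1) (b := 0) (c := k + 1)
    (by lia) (by lia) (by lia) (by lia)).hasSum
  have hone : oppositeHarmonic 1 = 0 := by simp [oppositeHarmonic]
  rw [← hasSum_nat_add_iff' 1, sum_range_one, zero_add, hone, if_neg (by norm_num), sub_zero,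
    zero_div, sub_zero]
  convert! hsum using 2 with s
  rw [sum_antidiagonal_tornheimTerm]
  push_cast
  ring_nf

theorem partial_double_zeta_mod_three (k : ℕ) (hk : 1 ≤ k) :
    (∑ ν ∈ Finset.Icc 1 k, ∑' p : ℕ × ℕ,
        if (p.1 + 1) % 3 = (p.2 + 1) % 3 then
          1 / (((p.2 : ℂ) + 1) ^ ν * ((p.1 : ℂ) + 1 + ((p.2 : ℂ) + 1)) ^ (k + 2 - ν))
        else 0)
      = riemannZeta (k + 2) / 3 ^ (k + 2)
        + ((π : ℂ) / (3 * Real.sqrt 3)) * ∑' n : ℕ, chi3 (n + 1) / ((n : ℂ) + 1) ^ (k + 1) := by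
  have hζ : HasSum (fun t : ℕ ↦
      (if 3 ∣ t + 1 then 1 / ((t : ℂ) + 1) else 0) / ((t : ℂ) + 1) ^ (k + 1))
      (riemannZeta (k + 2) / 3 ^ (k + 2)) := by
    convert! hasSum_ite_dvd_one_div_add_one_pow (s := k + 2) (N := 3) (by lia) (by lia) using 2
      with t
    · rw [ite_div, zero_div, div_div, ← pow_succ']
    · push_cast
      rfl
  have hL := (summable_chi3_div_pow (s := k + 1) (by lia)).hasSum.mul_left
    ((π : ℂ) / (3 * Real.sqrt 3))
  have htornheim :=
    (hasSum_tornheimTerm_fiberwise_snd hk).sub (hasSum_tornheimTerm_fiberwise_add hk)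
  calc _ = ∑ ν ∈ Icc 1 k, ∑' p, tornheimTerm 3 0 ν (k + 2 - ν) p := by
        simp only [tornheimTerm, pow_zero, one_mul]
    _ = _ := sum_Icc_tsum_tornheimTerm 3 hk
    _ = _ := htornheim.unique (by convert! hζ.add hL using 2 with t; ring)
end
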